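/- arXiv:1809.08206 — 2 statements merged into one kernel-verified Lean document; each statement's English description precedes it below -/
import Mathlib

section
/- Let x_1 < x_2 < ... < x_N (N > 2), I = [x_1, x_N], L_i : I → [x_i, x_{i+1}] the affine maps with L_i(x_1) = x_i, L_i(x_N) = x_{i+1}, and F_i : I × ℝ → ℝ continuous with F_i(x_1, y_1) = y_i, F_i(x_N, y_N) = y_{i+1} and |F_i(x,y) − F_i(x,y*)| ≤ r_i |y − y*| with 0 < r_i < 1. Then there exists a unique continuous function g : I → ℝ such that g(x_i) = y_i for all i = 1,...,N and g satisfies the self-referential functional equation g(L_i(x)) = F_i(x, g(x)) for all x ∈ I and all i = 1,...,N−1. -/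
/-!
On continuous functions `g` with `g (x 1) = y 1` and `g (x N) = y N`, the Read–Bajraktarević
operator `(T g) (L i t) = F i t (g t)` is well defined: two pieces `L i` and `L j` overlap only at a
common node, where the endpoint conditions on `F` make the two prescriptions agree. Continuity of
`T g` is automatic, because the pieces exhibit the interval as a quotient of finitely many copies of
itself. As `T` contracts the uniform distance, Banach's theorem yields the fixed point; the same
estimate, applied to two self-referential functions, gives uniqueness.
-/

open Set Function
open scoped NNReal

section ReadBajraktarevic

variable {ι X Y : Type*} {L : ι → X → X} {F : ι → X → Y → Y}

/-- `h` is the image of `g` under the Read–Bajraktarević operator of the system `(L, F)`. This is a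
relation because the operator is defined only on those `g` for which the prescribed values agree on
the overlaps of the sets `L i (X)`. Its fixed points are the self-referential functions. -/
def IsReadBajraktarevicImage (L : ι → X → X) (F : ι → X → Y → Y) (g h : X → Y) : Prop :=
  ∀ i t, h (L i t) = F i t (g t)

theorem exists_isReadBajraktarevicImage [Finite ι] [TopologicalSpace X] [CompactSpace X] [T2Space X]
    [TopologicalSpace Y] (hL : ∀ i, Continuous (L i)) (hcover : ∀ t, ∃ i s, L i s = t)
    (hF : ∀ i, Continuous (uncurry (F i))) {g : X → Y} (hg : Continuous g)
    (hcompat : ∀ i j s t, L i s = L j t → F i s (g s) = F j t (g t)) :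
    ∃ h : C(X, Y), IsReadBajraktarevicImage L F g h := by
  let pieces : C((_ : ι) × X, X) := ⟨fun p ↦ L p.1 p.2, continuous_sigma hL⟩
  let values : C((_ : ι) × X, Y) :=
    ⟨fun p ↦ F p.1 p.2 (g p.2), continuous_sigma fun i ↦ (hF i).comp (continuous_id.prodMk hg)⟩
  have hsurj : Surjective pieces := fun t ↦
    let ⟨i, s, hs⟩ := hcover t
    ⟨⟨i, s⟩, hs⟩
  have hquot : Topology.IsQuotientMap pieces := .of_surjective_continuous hsurj pieces.continuous
  have hfactors : FactorsThrough values pieces := fun p q hpq ↦ hcompat p.1 q.1 p.2 q.2 hpq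
  exact ⟨hquot.lift values hfactors,
    fun i t ↦ DFunLike.congr_fun (hquot.lift_comp values hfactors) ⟨i, t⟩⟩

namespace IsReadBajraktarevicImage

variable [TopologicalSpace X] [CompactSpace X] {K : ℝ≥0}

theorem dist_le_mul_dist [PseudoMetricSpace Y] (hcover : ∀ t, ∃ i s, L i s = t)
    (hLip : ∀ i t, LipschitzWith K (F i t)) {g g' h h' : C(X, Y)}
    (hg : IsReadBajraktarevicImage L F g h) (hg' : IsReadBajraktarevicImage L F g' h') :
    dist h h' ≤ K * dist g g' := by
  refine (ContinuousMap.dist_le (by positivity)).2 fun t ↦ ?_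
  obtain ⟨i, s, rfl⟩ := hcover t
  calc dist (h (L i s)) (h' (L i s)) = dist (F i s (g s)) (F i s (g' s)) := by rw [hg, hg']
    _ ≤ K * dist (g s) (g' s) := (hLip i s).dist_le_mul _ _
    _ ≤ K * dist g g' := by gcongr; exact ContinuousMap.dist_apply_le_dist s

theorem fixedPoint_unique [MetricSpace Y] (hcover : ∀ t, ∃ i s, L i s = t) (hK : K < 1)
    (hLip : ∀ i t, LipschitzWith K (F i t)) {g g' : C(X, Y)}
    (hg : IsReadBajraktarevicImage L F g g) (hg' : IsReadBajraktarevicImage L F g' g') :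
    g = g' := by
  have hdist : dist g g' ≤ K * dist g g' := dist_le_mul_dist hcover hLip hg hg'
  by_contra hne
  exact hdist.not_gt (mul_lt_of_lt_one_left (dist_pos.2 hne) hK)

theorem exists_fixedPoint [MetricSpace Y] [CompleteSpace Y] (hcover : ∀ t, ∃ i s, L i s = t)
    (hK : K < 1) (hLip : ∀ i t, LipschitzWith K (F i t)) {S : Set C(X, Y)} (hSclosed : IsClosed S)
    (hSne : S.Nonempty) (himage : ∀ g ∈ S, ∃ h ∈ S, IsReadBajraktarevicImage L F g h) :
    ∃ g ∈ S, IsReadBajraktarevicImage L F g g := by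
  choose! T hTmem hT using himage
  have hcontr : ContractingWith K (MapsTo.restrict T S S hTmem) :=
    ⟨hK, .of_dist_le_mul fun g g' ↦ dist_le_mul_dist hcover hLip (hT g g.2) (hT g' g'.2)⟩
  obtain ⟨g₀, hg₀⟩ := hSne
  obtain ⟨g, hgS, hfix, -⟩ :=
    hcontr.exists_fixedPoint' hSclosed.isComplete hTmem hg₀ (edist_ne_top _ _)
  refine ⟨g, hgS, ?_⟩
  simpa only [hfix.eq] using hT g hgS

end IsReadBajraktarevicImage

end ReadBajraktarevic

theorem strictMonoOn_Icc_of_lt_succ {α : Type*} [Preorder α] {x : ℕ → α} {m n : ℕ}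
    (hx : ∀ i ∈ Ico m n, x i < x (i + 1)) : StrictMonoOn x (Icc m n) :=
  strictMonoOn_of_lt_add_one ordConnected_Icc fun i _ hi hi' ↦
    hx i ⟨hi.1, Nat.lt_of_succ_le hi'.2⟩

theorem exists_mem_Icc_succ {α : Type*} [LinearOrder α] (x : ℕ → α) {m n : ℕ} (hmn : m < n) {t : α}
    (ht : t ∈ Icc (x m) (x n)) : ∃ i ∈ Ico m n, t ∈ Icc (x i) (x (i + 1)) := by
  induction n, hmn using Nat.le_induction with
  | base => exact ⟨m, by simp, ht⟩
  | succ n hn ih =>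
    rcases le_total t (x n) with htn | htn
    · obtain ⟨i, hi, hti⟩ := ih ⟨ht.1, htn⟩
      exact ⟨i, ⟨hi.1, hi.2.trans n.lt_succ_self⟩, hti⟩
    · exact ⟨n, ⟨by omega, n.lt_succ_self⟩, htn, ht.2⟩

theorem domRestrict_IccExtend {α β : Type*} [LinearOrder α] {a b : α} (hab : a ≤ b)
    (f : Icc a b → β) : (Icc a b).domRestrict (IccExtend hab f) = f :=
  funext (IccExtend_val hab f)

theorem exists_continuousMap_of_joined {Y : Type*} [TopologicalSpace Y] {p q : Y}
    (hpq : Joined p q) {a b : ℝ} (hab : a ≠ b) : ∃ g : C(ℝ, Y), g a = p ∧ g b = q := by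
  obtain ⟨γ⟩ := hpq
  refine ⟨⟨fun t ↦ γ.extend ((t - a) / (b - a)), by fun_prop⟩, ?_, ?_⟩
  · simp
  · simp [div_self (sub_ne_zero.2 hab.symm)]

theorem exists_nnreal_lt_one_forall_le {ι : Type*} (s : Finset ι) {r : ι → ℝ}
    (hr : ∀ i ∈ s, r i < 1) : ∃ K : ℝ≥0, K < 1 ∧ ∀ i ∈ s, r i ≤ K := by
  refine ⟨s.sup fun i ↦ (r i).toNNReal, (Finset.sup_lt_iff zero_lt_one).2 fun i hi ↦ ?_,
    fun i hi ↦ ?_⟩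
  · exact Real.toNNReal_lt_one.2 (hr i hi)
  · exact Real.toNNReal_le_iff_le_coe.1 (Finset.le_sup (f := fun i ↦ (r i).toNNReal) hi)

section AffineIcc

variable {𝕜 : Type*} [Field 𝕜]

/-- The affine map sending `a` to `c` and `b` to `d`, in the form in which the maps `Lᵢ` of a
fractal interpolation scheme are written. -/
def affineIcc (a b c d t : 𝕜) : 𝕜 :=
  (d - c) / (b - a) * t + (b * c - a * d) / (b - a)

variable {a b c d : 𝕜}

theorem continuous_affineIcc [TopologicalSpace 𝕜] [IsTopologicalRing 𝕜] :
    Continuous (affineIcc a b c d) := by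
  unfold affineIcc
  fun_prop

theorem strictMono_affineIcc [LinearOrder 𝕜] [IsStrictOrderedRing 𝕜] (hab : a < b) (hcd : c < d) :
    StrictMono (affineIcc a b c d) := by
  have hslope : 0 < (d - c) / (b - a) := div_pos (sub_pos.2 hcd) (sub_pos.2 hab)
  exact (strictMono_mul_left_of_pos hslope).add_const _

theorem affineIcc_left (hab : a ≠ b) : affineIcc a b c d a = c := by
  have hne : b - a ≠ 0 := sub_ne_zero.2 hab.symm
  unfold affineIcc
  field_simp
  ring

theorem affineIcc_right (hab : a ≠ b) : affineIcc a b c d b = d := by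
  have hne : b - a ≠ 0 := sub_ne_zero.2 hab.symm
  unfold affineIcc
  field_simp
  ring

end AffineIcc

/-- The data of a fractal interpolation problem on `I = [x 1, x N]` with nodes `x 1 < ⋯ < x N` and
values `y 1, …, y N`: increasing homeomorphisms `L i` from `I` onto `[x i, x (i + 1)]` (surjectivity
being left to the intermediate value theorem) and vertical maps `F i` sending the end data
`(x 1, y 1)`, `(x N, y N)` to `y i`, `y (i + 1)`. The pieces are indexed by `1 ≤ i < N`; values at
other indices are irrelevant. -/
structure IsFractalInterpolationSystem {Y : Type*} [TopologicalSpace Y] (N : ℕ) (x : ℕ → ℝ)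
    (y : ℕ → Y) (L : ℕ → ℝ → ℝ) (F : ℕ → ℝ → Y → Y) : Prop where
  one_lt : 1 < N
  node_lt : ∀ i ∈ Ico 1 N, x i < x (i + 1)
  continuousOn_L : ∀ i ∈ Ico 1 N, ContinuousOn (L i) (Icc (x 1) (x N))
  strictMonoOn_L : ∀ i ∈ Ico 1 N, StrictMonoOn (L i) (Icc (x 1) (x N))
  L_left : ∀ i ∈ Ico 1 N, L i (x 1) = x i
  L_right : ∀ i ∈ Ico 1 N, L i (x N) = x (i + 1)
  continuousOn_F : ∀ i ∈ Ico 1 N, ContinuousOn (uncurry (F i)) (Icc (x 1) (x N) ×ˢ univ)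
  F_left : ∀ i ∈ Ico 1 N, F i (x 1) (y 1) = y i
  F_right : ∀ i ∈ Ico 1 N, F i (x N) (y N) = y (i + 1)

namespace IsFractalInterpolationSystem

variable {Y : Type*} {N : ℕ} {x : ℕ → ℝ} {L : ℕ → ℝ → ℝ}

section Topological

variable [TopologicalSpace Y] {y : ℕ → Y} {F : ℕ → ℝ → Y → Y}
  (h : IsFractalInterpolationSystem N x y L F)
include h

theorem strictMonoOn_node : StrictMonoOn x (Icc 1 N) :=
  strictMonoOn_Icc_of_lt_succ h.node_lt

theorem node_mem_Icc {i : ℕ} (hi : i ∈ Icc 1 N) : x i ∈ Icc (x 1) (x N) :=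
  have hmono := h.strictMonoOn_node.monotoneOn
  ⟨hmono ⟨le_rfl, h.one_lt.le⟩ hi hi.1, hmono hi ⟨h.one_lt.le, le_rfl⟩ hi.2⟩

theorem left_lt_right : x 1 < x N :=
  h.strictMonoOn_node ⟨le_rfl, h.one_lt.le⟩ ⟨h.one_lt.le, le_rfl⟩ h.one_lt

theorem mapsTo_Icc_node {i : ℕ} (hi : i ∈ Ico 1 N) :
    MapsTo (L i) (Icc (x 1) (x N)) (Icc (x i) (x (i + 1))) := by
  simpa only [h.L_left i hi, h.L_right i hi] using (h.strictMonoOn_L i hi).monotoneOn.mapsTo_Icc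

theorem mapsTo_Icc {i : ℕ} (hi : i ∈ Ico 1 N) :
    MapsTo (L i) (Icc (x 1) (x N)) (Icc (x 1) (x N)) :=
  (h.mapsTo_Icc_node hi).mono_right <|
    Icc_subset_Icc (h.node_mem_Icc ⟨hi.1, hi.2.le⟩).1 (h.node_mem_Icc ⟨by omega, hi.2⟩).2

theorem exists_L_eq {t : ℝ} (ht : t ∈ Icc (x 1) (x N)) :
    ∃ i ∈ Ico 1 N, ∃ s ∈ Icc (x 1) (x N), L i s = t := by
  obtain ⟨i, hi, hti⟩ := exists_mem_Icc_succ x h.one_lt ht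
  rw [← h.L_left i hi, ← h.L_right i hi] at hti
  exact ⟨i, hi, intermediate_value_Icc h.left_lt_right.le (h.continuousOn_L i hi) hti⟩

theorem eq_endpoints_of_L_eq_of_lt {i j : ℕ} (hi : i ∈ Ico 1 N) (hj : j ∈ Ico 1 N) (hij : i < j)
    {s t : ℝ} (hs : s ∈ Icc (x 1) (x N)) (ht : t ∈ Icc (x 1) (x N)) (hst : L i s = L j t) :
    j = i + 1 ∧ s = x N ∧ t = x 1 := by
  have hnodes := h.strictMonoOn_node
  have hi' : i + 1 ∈ Icc 1 N := ⟨by omega, hi.2⟩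
  have hj' : j ∈ Icc 1 N := ⟨hj.1, hj.2.le⟩
  have hle : x (i + 1) ≤ x j := hnodes.monotoneOn hi' hj' hij
  have hupper : L i s ≤ x (i + 1) := (h.mapsTo_Icc_node hi hs).2
  have hlower : x j ≤ L j t := (h.mapsTo_Icc_node hj ht).1
  have hleft : x 1 ∈ Icc (x 1) (x N) := left_mem_Icc.2 h.left_lt_right.le
  have hright : x N ∈ Icc (x 1) (x N) := right_mem_Icc.2 h.left_lt_right.le
  refine ⟨hnodes.injOn hj' hi' (by linarith), (h.strictMonoOn_L i hi).injOn hs hright ?_,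
    (h.strictMonoOn_L j hj).injOn ht hleft ?_⟩
  · linarith [h.L_right i hi]
  · linarith [h.L_left j hj]

theorem F_eq_of_L_eq {g : ℝ → Y} (hleft : g (x 1) = y 1) (hright : g (x N) = y N) {i j : ℕ}
    (hi : i ∈ Ico 1 N) (hj : j ∈ Ico 1 N) {s t : ℝ} (hs : s ∈ Icc (x 1) (x N))
    (ht : t ∈ Icc (x 1) (x N)) (hst : L i s = L j t) : F i s (g s) = F j t (g t) := by
  wlog hij : i ≤ j generalizing i j s t
  · exact (this hj hi ht hs hst.symm (le_of_not_ge hij)).symm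
  obtain rfl | hlt := hij.eq_or_lt
  · rw [(h.strictMonoOn_L i hi).injOn hs ht hst]
  · obtain ⟨rfl, rfl, rfl⟩ := h.eq_endpoints_of_L_eq_of_lt hi hj hlt hs ht hst
    rw [hleft, hright, h.F_right i hi, h.F_left (i + 1) hj]

theorem apply_node_eq {g k : ℝ → Y} (hleft : g (x 1) = y 1) (hright : g (x N) = y N)
    (hk : ∀ i ∈ Ico 1 N, ∀ t ∈ Icc (x 1) (x N), k (L i t) = F i t (g t)) {i : ℕ}
    (hi : i ∈ Icc 1 N) : k (x i) = y i := by
  obtain rfl | hlt := hi.2.eq_or_lt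
  · obtain ⟨n, rfl⟩ : ∃ n, i = n + 1 := ⟨i - 1, by have := hi.1; omega⟩
    have hn : n ∈ Ico 1 (n + 1) := ⟨Nat.le_of_lt_succ h.one_lt, n.lt_succ_self⟩
    rw [← h.L_right n hn, hk n hn _ (right_mem_Icc.2 h.left_lt_right.le), hright, h.F_right n hn]
  · have hi' : i ∈ Ico 1 N := ⟨hi.1, hlt⟩
    rw [← h.L_left i hi', hk i hi' _ (left_mem_Icc.2 h.left_lt_right.le), hleft, h.F_left i hi']

/-- The map `L i` as a self-map of the interval `[x 1, x N]`. -/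
def piece (i : Ico 1 N) : Icc (x 1) (x N) → Icc (x 1) (x N) :=
  (h.mapsTo_Icc i.2).restrict

theorem continuous_piece (i : Ico 1 N) : Continuous (h.piece i) :=
  (h.continuousOn_L i i.2).mapsToRestrict (h.mapsTo_Icc i.2)

theorem exists_piece_eq (t : Icc (x 1) (x N)) : ∃ i s, h.piece i s = t := by
  obtain ⟨i, hi, s, hs, hst⟩ := h.exists_L_eq t.2
  exact ⟨⟨i, hi⟩, ⟨s, hs⟩, Subtype.ext hst⟩

theorem continuous_uncurry_F (i : Ico 1 N) :
    Continuous (uncurry fun t : Icc (x 1) (x N) ↦ F i t) :=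
  (h.continuousOn_F i i.2).comp_continuous (f := Prod.map Subtype.val id) (by fun_prop)
    fun p ↦ ⟨p.1.2, trivial⟩

theorem isReadBajraktarevicImage_domRestrict_iff {g k : ℝ → Y} :
    IsReadBajraktarevicImage h.piece (fun i t ↦ F i t) ((Icc (x 1) (x N)).domRestrict g)
        ((Icc (x 1) (x N)).domRestrict k) ↔
      ∀ i ∈ Ico 1 N, ∀ t ∈ Icc (x 1) (x N), k (L i t) = F i t (g t) :=
  ⟨fun hk i hi t ht ↦ hk ⟨i, hi⟩ ⟨t, ht⟩, fun hk i t ↦ hk i i.2 t t.2⟩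

/-- The continuous functions on `[x 1, x N]` with the prescribed values at the two endpoints, the
domain of the Read–Bajraktarević operator. -/
def endpointFunctions : Set C(Icc (x 1) (x N), Y) :=
  {g | g ⟨x 1, left_mem_Icc.2 h.left_lt_right.le⟩ = y 1 ∧
    g ⟨x N, right_mem_Icc.2 h.left_lt_right.le⟩ = y N}

theorem endpointFunctions_nonempty (hy : Joined (y 1) (y N)) : h.endpointFunctions.Nonempty := by
  obtain ⟨g, hleft, hright⟩ := exists_continuousMap_of_joined hy h.left_lt_right.ne
  exact ⟨g.restrict _, hleft, hright⟩

theorem isClosed_endpointFunctions [T2Space Y] : IsClosed h.endpointFunctions :=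
  (isClosed_eq (continuous_eval_const _) continuous_const).inter
    (isClosed_eq (continuous_eval_const _) continuous_const)

theorem exists_image_mem_endpointFunctions {g : C(Icc (x 1) (x N), Y)}
    (hg : g ∈ h.endpointFunctions) :
    ∃ k ∈ h.endpointFunctions, IsReadBajraktarevicImage h.piece (fun i t ↦ F i t) g k := by
  have hle := h.left_lt_right.le
  have hleft : IccExtend hle g (x 1) = y 1 := (IccExtend_left hle g).trans hg.1
  have hright : IccExtend hle g (x N) = y N := (IccExtend_right hle g).trans hg.2
  obtain ⟨k, hk⟩ := exists_isReadBajraktarevicImage h.continuous_piece h.exists_piece_eq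
    h.continuous_uncurry_F g.continuous fun i j s t hst ↦ by
      simpa only [IccExtend_val] using
        h.F_eq_of_L_eq hleft hright i.2 j.2 s.2 t.2 (congrArg Subtype.val hst)
  have hnode {i : ℕ} (hi : i ∈ Icc 1 N) : IccExtend hle k (x i) = y i := by
    refine h.apply_node_eq hleft hright (h.isReadBajraktarevicImage_domRestrict_iff.1 ?_) hi
    simpa only [domRestrict_IccExtend] using hk
  refine ⟨k, ⟨?_, ?_⟩, hk⟩
  · exact (IccExtend_left hle k).symm.trans (hnode ⟨le_rfl, h.one_lt.le⟩)
  · exact (IccExtend_right hle k).symm.trans (hnode ⟨h.one_lt.le, le_rfl⟩)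

end Topological

section Metric

variable [MetricSpace Y] {y : ℕ → Y} {F : ℕ → ℝ → Y → Y} {K : ℝ≥0}
  (h : IsFractalInterpolationSystem N x y L F) (hK : K < 1)
  (hLip : ∀ i ∈ Ico 1 N, ∀ t ∈ Icc (x 1) (x N), LipschitzWith K (F i t))
include h hK hLip

theorem exists_selfReferential [CompleteSpace Y] (hy : Joined (y 1) (y N)) :
    ∃ g : ℝ → Y, ContinuousOn g (Icc (x 1) (x N)) ∧ (∀ i ∈ Icc 1 N, g (x i) = y i) ∧
      ∀ i ∈ Ico 1 N, ∀ t ∈ Icc (x 1) (x N), g (L i t) = F i t (g t) := by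
  obtain ⟨f, ⟨hleft, hright⟩, hf⟩ := IsReadBajraktarevicImage.exists_fixedPoint h.exists_piece_eq hK
    (fun i t ↦ hLip i i.2 t t.2) h.isClosed_endpointFunctions (h.endpointFunctions_nonempty hy)
    fun _ ↦ h.exists_image_mem_endpointFunctions
  have hle := h.left_lt_right.le
  have hself : ∀ i ∈ Ico 1 N, ∀ t ∈ Icc (x 1) (x N),
      IccExtend hle f (L i t) = F i t (IccExtend hle f t) := by
    refine h.isReadBajraktarevicImage_domRestrict_iff.1 ?_
    simpa only [domRestrict_IccExtend] using hf
  refine ⟨IccExtend hle f, f.continuous.Icc_extend'.continuousOn, fun i hi ↦ ?_, hself⟩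
  exact h.apply_node_eq ((IccExtend_left hle f).trans hleft)
    ((IccExtend_right hle f).trans hright) hself hi

theorem eqOn_of_selfReferential {g g' : ℝ → Y} (hg : ContinuousOn g (Icc (x 1) (x N)))
    (hg' : ContinuousOn g' (Icc (x 1) (x N)))
    (hself : ∀ i ∈ Ico 1 N, ∀ t ∈ Icc (x 1) (x N), g (L i t) = F i t (g t))
    (hself' : ∀ i ∈ Ico 1 N, ∀ t ∈ Icc (x 1) (x N), g' (L i t) = F i t (g' t)) :
    EqOn g g' (Icc (x 1) (x N)) := by
  have hrestrict : (⟨_, hg.domRestrict⟩ : C(Icc (x 1) (x N), Y)) = ⟨_, hg'.domRestrict⟩ :=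
    IsReadBajraktarevicImage.fixedPoint_unique h.exists_piece_eq hK
      (fun i t ↦ hLip i i.2 t t.2) (h.isReadBajraktarevicImage_domRestrict_iff.2 hself)
      (h.isReadBajraktarevicImage_domRestrict_iff.2 hself')
  exact fun t ht ↦ DFunLike.congr_fun hrestrict ⟨t, ht⟩

end Metric

end IsFractalInterpolationSystem

theorem isFractalInterpolationSystem_of_affine {Y : Type*} [TopologicalSpace Y] {N : ℕ}
    (hN : 1 < N) {x : ℕ → ℝ} {y : ℕ → Y} (hx : ∀ i ∈ Ico 1 N, x i < x (i + 1)) {L : ℕ → ℝ → ℝ}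
    (hL : ∀ i ∈ Ico 1 N, L i = affineIcc (x 1) (x N) (x i) (x (i + 1))) {F : ℕ → ℝ → Y → Y}
    (hFcont : ∀ i ∈ Ico 1 N, ContinuousOn (uncurry (F i)) (Icc (x 1) (x N) ×ˢ univ))
    (hFleft : ∀ i ∈ Ico 1 N, F i (x 1) (y 1) = y i)
    (hFright : ∀ i ∈ Ico 1 N, F i (x N) (y N) = y (i + 1)) :
    IsFractalInterpolationSystem N x y L F :=
  have hlt : x 1 < x N := strictMonoOn_Icc_of_lt_succ hx ⟨le_rfl, hN.le⟩ ⟨hN.le, le_rfl⟩ hN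
  { one_lt := hN
    node_lt := hx
    continuousOn_L := fun i hi ↦ hL i hi ▸ continuous_affineIcc.continuousOn
    strictMonoOn_L := fun i hi ↦ hL i hi ▸ (strictMono_affineIcc hlt (hx i hi)).strictMonoOn _
    L_left := fun i hi ↦ hL i hi ▸ affineIcc_left hlt.ne
    L_right := fun i hi ↦ hL i hi ▸ affineIcc_right hlt.ne
    continuousOn_F := hFcont
    F_left := hFleft
    F_right := hFright }

theorem stmt_1_general {Y : Type*} [MetricSpace Y] [CompleteSpace Y] {N : ℕ} {x : ℕ → ℝ}
    {y : ℕ → Y} {L : ℕ → ℝ → ℝ} {F : ℕ → ℝ → Y → Y} {r : ℕ → ℝ}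
    (h : IsFractalInterpolationSystem N x y L F) (hy : Joined (y 1) (y N))
    (hr : ∀ i ∈ Ico 1 N, r i < 1)
    (hLip : ∀ i ∈ Ico 1 N, ∀ t ∈ Icc (x 1) (x N), ∀ z z' : Y,
      dist (F i t z) (F i t z') ≤ r i * dist z z') :
    ∃ g : ℝ → Y,
      (ContinuousOn g (Icc (x 1) (x N)) ∧
        (∀ i ∈ Icc 1 N, g (x i) = y i) ∧
        (∀ i ∈ Ico 1 N, ∀ t ∈ Icc (x 1) (x N), g (L i t) = F i t (g t))) ∧
      (∀ g' : ℝ → Y,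
        ContinuousOn g' (Icc (x 1) (x N)) →
        (∀ i ∈ Ico 1 N, ∀ t ∈ Icc (x 1) (x N), g' (L i t) = F i t (g' t)) →
        EqOn g' g (Icc (x 1) (x N))) := by
  obtain ⟨K, hK, hrK⟩ := exists_nnreal_lt_one_forall_le (Finset.Ico 1 N) (r := r)
    fun i hi ↦ hr i (Finset.mem_Ico.1 hi)
  have hLipK : ∀ i ∈ Ico 1 N, ∀ t ∈ Icc (x 1) (x N), LipschitzWith K (F i t) :=
    fun i hi t ht ↦ .of_dist_le_mul fun z z' ↦
      (hLip i hi t ht z z').trans (by gcongr; exact hrK i (Finset.mem_Ico.2 hi))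
  obtain ⟨g, hcont, hinterp, hself⟩ := h.exists_selfReferential hK hLipK hy
  exact ⟨g, ⟨hcont, hinterp, hself⟩, fun g' hcont' hself' ↦
    h.eqOn_of_selfReferential hK hLipK hcont' hcont hself' hself⟩

/-- Existence and uniqueness of the fractal interpolation function:
there is a unique continuous `g : I → ℝ` with `g(xᵢ) = yᵢ` for all `i` and
`g(Lᵢ(x)) = Fᵢ(x, g(x))` for all `x ∈ I` and `i = 1,…,N-1`. -/
theorem stmt_1
    (N : ℕ) (hN : 2 < N)
    (x y : ℕ → ℝ)
    (hx : ∀ i, 1 ≤ i → i < N → x i < x (i + 1))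
    (L : ℕ → ℝ → ℝ)
    (hL : ∀ i, 1 ≤ i → i < N → ∀ t : ℝ, L i t =
      ((x (i + 1) - x i) / (x N - x 1)) * t
        + (x N * x i - x 1 * x (i + 1)) / (x N - x 1))
    (F : ℕ → ℝ → ℝ → ℝ) (r : ℕ → ℝ)
    (hFcont : ∀ i, 1 ≤ i → i < N → Continuous (fun p : ℝ × ℝ => F i p.1 p.2))
    (hF1 : ∀ i, 1 ≤ i → i < N → F i (x 1) (y 1) = y i)
    (hFN : ∀ i, 1 ≤ i → i < N → F i (x N) (y N) = y (i + 1))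
    (hr : ∀ i, 1 ≤ i → i < N → 0 < r i ∧ r i < 1)
    (hLip : ∀ i, 1 ≤ i → i < N → ∀ t ∈ Set.Icc (x 1) (x N), ∀ z z' : ℝ,
      |F i t z - F i t z'| ≤ r i * |z - z'|) :
    ∃ g : ℝ → ℝ,
      (ContinuousOn g (Set.Icc (x 1) (x N)) ∧
        (∀ i, 1 ≤ i → i ≤ N → g (x i) = y i) ∧
        (∀ i, 1 ≤ i → i < N → ∀ t ∈ Set.Icc (x 1) (x N),
          g (L i t) = F i t (g t))) ∧
      (∀ g' : ℝ → ℝ,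
        ContinuousOn g' (Set.Icc (x 1) (x N)) →
        (∀ i, 1 ≤ i → i ≤ N → g' (x i) = y i) →
        (∀ i, 1 ≤ i → i < N → ∀ t ∈ Set.Icc (x 1) (x N),
          g' (L i t) = F i t (g' t)) →
        Set.EqOn g' g (Set.Icc (x 1) (x N))) := by
  have h : IsFractalInterpolationSystem N x y L F :=
    isFractalInterpolationSystem_of_affine (by omega) (fun i hi ↦ hx i hi.1 hi.2)
      (fun i hi ↦ funext (hL i hi.1 hi.2)) (fun i hi ↦ (hFcont i hi.1 hi.2).continuousOn)
      (fun i hi ↦ hF1 i hi.1 hi.2) (fun i hi ↦ hFN i hi.1 hi.2)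
  obtain ⟨g, ⟨hcont, hinterp, hself⟩, huniq⟩ :=
    stmt_1_general h (PathConnectedSpace.joined _ _) (fun i hi ↦ (hr i hi.1 hi.2).2)
      fun i hi ↦ hLip i hi.1 hi.2
  exact ⟨g, ⟨hcont, fun i h₁ h₂ ↦ hinterp i ⟨h₁, h₂⟩, fun i h₁ h₂ ↦ hself i ⟨h₁, h₂⟩⟩,
    fun g' hcont' _ hself' ↦ huniq g' hcont' fun i hi ↦ hself' i hi.1 hi.2⟩
end

section
/- Let {(x_i, y_i, d_i) : i = 1,...,N} be given data with x_1 < x_2 < ... < x_N and y_i > 0 for all i, and let C be the classical C^1 rational cubic spline defined on each [x_i, x_{i+1}] by C(x) = P_i^*(υ)/Q_i^*(υ) with υ = (x − x_i)/h_i, P_i^*(υ) = u_i y_i (1−υ)^3 + [(3u_i + v_i) y_i + u_i h_i d_i] υ(1−υ)^2 + [(3u_i + v_i) y_{i+1} − u_i h_i d_{i+1}] υ^2(1−υ) + u_i y_{i+1} υ^3 and Q_i^*(υ) = u_i + v_i υ(1−υ). If u_i > 0 and v_i ≥ max{0, −u_i[3 + h_i d_i / y_i], −u_i[3 − h_i d_{i+1}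 / y_{i+1}]} for every i, then C(x) > 0 for all x ∈ [x_1, x_N]. -/
/-!
The two bounds on `vᵢ` in terms of the data say exactly that the inner coefficients of the
numerator, in the Bernstein form on `[0, 1]`, are nonnegative, while the outer ones are
`uᵢ yᵢ > 0` and `uᵢ yᵢ₊₁ > 0`; so the numerator is positive. For the denominator,
`u + v s (1 - s) = u (1 - 2 s)² + (4 u + v) s (1 - s)`, so already `v > -4 u` is enough.
-/

section OrderedRing

variable {R : Type*} [CommRing R] [LinearOrder R] [IsStrictOrderedRing R]

theorem cubic_bernstein_pos {a b c e s : R} (ha : 0 < a) (hb : 0 ≤ b) (hc : 0 ≤ c) (he : 0 < e)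
    (hs : s ∈ Set.Icc 0 1) :
    0 < a * (1 - s) ^ 3 + b * s * (1 - s) ^ 2 + c * s ^ 2 * (1 - s) + e * s ^ 3 := by
  obtain ⟨hs₀, hs₁⟩ := hs
  have hs₁' : 0 ≤ 1 - s := sub_nonneg.2 hs₁
  rcases hs₀.eq_or_lt with rfl | hs_pos
  · simpa using ha
  · positivity

theorem add_mul_mul_one_sub_pos {u v s : R} (hu : 0 < u) (hv : -4 * u < v) (hs : s ∈ Set.Icc 0 1) :
    0 < u + v * s * (1 - s) := by
  have hprod : 0 ≤ s * (1 - s) := mul_nonneg hs.1 (sub_nonneg.2 hs.2)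
  rcases hprod.eq_or_lt with hzero | hpos
  · rwa [mul_assoc, ← hzero, mul_zero, add_zero]
  · have huv : 0 < 4 * u + v := by linarith
    calc
      0 < u * (1 - 2 * s) ^ 2 + (4 * u + v) * (s * (1 - s)) := by positivity
      _ = u + v * s * (1 - s) := by ring

end OrderedRing

theorem exists_mem_Icc_succ_of_mem_Icc {α : Type*} [LinearOrder α] {x : ℕ → α} {m n : ℕ} {t : α}
    (hmn : m < n) (ht : t ∈ Set.Icc (x m) (x n)) :
    ∃ i, m ≤ i ∧ i < n ∧ t ∈ Set.Icc (x i) (x (i + 1)) := by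
  induction n, hmn using Nat.le_induction with
  | base => exact ⟨m, le_rfl, m.lt_succ_self, ht⟩
  | succ n hmn ih =>
    rcases le_total t (x n) with hle | hge
    · obtain ⟨i, hmi, hin, hti⟩ := ih ⟨ht.1, hle⟩
      exact ⟨i, hmi, hin.trans n.lt_succ_self, hti⟩
    · exact ⟨n, Nat.le_of_succ_le hmn, n.lt_succ_self, hge, ht.2⟩

section OrderedField

variable {K : Type*} [Field K] [LinearOrder K] [IsStrictOrderedRing K]

theorem inner_bernstein_coeff_nonneg {u v y m : K} (hy : 0 < y) (hv : -u * (3 + m / y) ≤ v) :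
    0 ≤ (3 * u + v) * y + u * m := by
  calc
    0 ≤ (v - -u * (3 + m / y)) * y := mul_nonneg (sub_nonneg.2 hv) hy.le
    _ = (3 * u + v) * y + u * m := by field_simp; ring

/-- The rational cubic Hermite piece `P* / Q*` on an interval of length `h`, with end values
`y₀`, `y₁`, end slopes `d₀`, `d₁` and shape parameters `u`, `v`, as a function of the
normalized variable `s ∈ [0, 1]`. -/
def rationalCubic (u v h y₀ y₁ d₀ d₁ s : K) : K :=
  (u * y₀ * (1 - s) ^ 3
    + ((3 * u + v) * y₀ + u * h * d₀) * s * (1 - s) ^ 2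
    + ((3 * u + v) * y₁ - u * h * d₁) * s ^ 2 * (1 - s)
    + u * y₁ * s ^ 3) / (u + v * s * (1 - s))

theorem rationalCubic_pos {u v h y₀ y₁ d₀ d₁ s : K} (hu : 0 < u) (hy₀ : 0 < y₀) (hy₁ : 0 < y₁)
    (hv : -4 * u < v) (hv₀ : -u * (3 + h * d₀ / y₀) ≤ v) (hv₁ : -u * (3 - h * d₁ / y₁) ≤ v)
    (hs : s ∈ Set.Icc 0 1) :
    0 < rationalCubic u v h y₀ y₁ d₀ d₁ s := by
  have hcoeff₀ : 0 ≤ (3 * u + v) * y₀ + u * h * d₀ := by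
    simpa only [mul_assoc] using inner_bernstein_coeff_nonneg hy₀ hv₀
  have hcoeff₁ : 0 ≤ (3 * u + v) * y₁ - u * h * d₁ := by
    rw [sub_eq_add_neg, ← neg_div] at hv₁
    simpa only [mul_neg, ← sub_eq_add_neg, mul_assoc] using inner_bernstein_coeff_nonneg hy₁ hv₁
  exact div_pos (cubic_bernstein_pos (mul_pos hu hy₀) hcoeff₀ hcoeff₁ (mul_pos hu hy₁) hs)
    (add_mul_mul_one_sub_pos hu hv hs)

theorem stmt_6_general {N : ℕ} (hN : 1 < N) {x y d u v : ℕ → K}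
    (hx : ∀ i, 1 ≤ i → i < N → x i < x (i + 1))
    (hy : ∀ i, 1 ≤ i → i ≤ N → 0 < y i)
    (hu : ∀ i, 1 ≤ i → i < N → 0 < u i)
    (hv : ∀ i, 1 ≤ i → i < N → -4 * u i < v i)
    (hv' : ∀ i, 1 ≤ i → i < N →
      max (-(u i) * (3 + (x (i + 1) - x i) * d i / y i))
        (-(u i) * (3 - (x (i + 1) - x i) * d (i + 1) / y (i + 1))) ≤ v i)
    {C : K → K}
    (hC : ∀ i, 1 ≤ i → i < N → ∀ t ∈ Set.Icc (x i) (x (i + 1)),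
      C t = rationalCubic (u i) (v i) (x (i + 1) - x i) (y i) (y (i + 1)) (d i) (d (i + 1))
        ((t - x i) / (x (i + 1) - x i))) :
    ∀ t ∈ Set.Icc (x 1) (x N), 0 < C t := by
  intro t ht
  obtain ⟨i, h1i, hiN, hti⟩ := exists_mem_Icc_succ_of_mem_Icc hN ht
  have hh : 0 < x (i + 1) - x i := sub_pos.2 (hx i h1i hiN)
  have hs : (t - x i) / (x (i + 1) - x i) ∈ Set.Icc 0 1 :=
    ⟨div_nonneg (sub_nonneg.2 hti.1) hh.le, (div_le_one hh).2 (sub_le_sub_right hti.2 _)⟩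
  obtain ⟨hv₀, hv₁⟩ := max_le_iff.1 (hv' i h1i hiN)
  rw [hC i h1i hiN t hti]
  exact rationalCubic_pos (hu i h1i hiN) (hy i h1i hiN.le) (hy (i + 1) (by lia) hiN)
    (hv i h1i hiN) hv₀ hv₁ hs

end OrderedField

/-- Positivity of the classical `C¹` rational cubic spline: if
`uᵢ > 0` and `vᵢ ≥ max{0, −uᵢ(3 + hᵢdᵢ/yᵢ), −uᵢ(3 − hᵢd_{i+1}/y_{i+1})}` for
every `i`, then `C(x) > 0` on `[x₁, x_N]`. -/
theorem stmt_6
    (N : ℕ) (hN : 2 < N)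
    (x y d : ℕ → ℝ)
    (hx : ∀ i, 1 ≤ i → i < N → x i < x (i + 1))
    (hy : ∀ i, 1 ≤ i → i ≤ N → 0 < y i)
    (u v : ℕ → ℝ)
    (hu : ∀ i, 1 ≤ i → i < N → 0 < u i)
    (hv : ∀ i, 1 ≤ i → i < N →
      max 0 (max
        (-(u i) * (3 + (x (i + 1) - x i) * d i / y i))
        (-(u i) * (3 - (x (i + 1) - x i) * d (i + 1) / y (i + 1)))) ≤ v i)
    (C : ℝ → ℝ)
    (hC : ∀ (i : ℕ), 1 ≤ i → i < N → ∀ t ∈ Set.Icc (x i) (x (i + 1)),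
      ∀ υ : ℝ, υ = (t - x i) / (x (i + 1) - x i) →
      C t = (u i * y i * (1 - υ) ^ 3
        + ((3 * u i + v i) * y i + u i * (x (i + 1) - x i) * d i) * υ * (1 - υ) ^ 2
        + ((3 * u i + v i) * y (i + 1)
            - u i * (x (i + 1) - x i) * d (i + 1)) * υ ^ 2 * (1 - υ)
        + u i * y (i + 1) * υ ^ 3) / (u i + v i * υ * (1 - υ))) :
    ∀ t ∈ Set.Icc (x 1) (x N), 0 < C t := by
  have hv_gt : ∀ i, 1 ≤ i → i < N → -4 * u i < v i := fun i h1i hiN => by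
    linarith [hu i h1i hiN, le_of_max_le_left (hv i h1i hiN)]
  exact stmt_6_general (by lia) hx hy hu hv_gt
    (fun i h1i hiN => le_of_max_le_right (hv i h1i hiN))
    (fun i h1i hiN t ht => hC i h1i hiN t ht _ rfl)
end
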